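/- (Power-constrained refinement of Proposition 9, equation (45).) For every n ≥ 1, every random vector X in ℝⁿ with (1/n)·E[‖X‖²] ≤ 1, and every snr > 0, (1/n)·Tr(E[(Cov(X|Y_snr))²]) ≤ (n + 2 − 1/(1+snr)²)/snr². -/

import Mathlib

open MeasureTheory ProbabilityTheory Real Matrix

noncomputable section

/-- The observation `Y_snr = √snr · X + Z` as a random vector in `ℝⁿ` (modeled as `Fin n → ℝ`). -/
def obs {Ω : Type*} {n : ℕ} (X Z : Ω → Fin n → ℝ) (snr : ℝ) : Ω → Fin n → ℝ :=
  fun ω i => Real.sqrt snr * X ω i + Z ω i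

/-- The σ-algebra generated by the observation `Y_snr`. -/
def obsSigma {Ω : Type*} [MeasurableSpace Ω] {n : ℕ} (X Z : Ω → Fin n → ℝ) (snr : ℝ) :
    MeasurableSpace Ω :=
  MeasurableSpace.comap (obs X Z snr) inferInstance

/-- Componentwise conditional expectation of a random vector given a sub-σ-algebra `m`. -/
def ceVec {Ω : Type*} {n : ℕ} (m : MeasurableSpace Ω) [MeasurableSpace Ω] (μ : Measure Ω)
    (V : Ω → Fin n → ℝ) : Ω → Fin n → ℝ :=
  fun ω i => (μ[fun ω' => V ω' i | m]) ω

/-- Entrywise conditional expectation of a random matrix given a sub-σ-algebra `m`. -/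
def ceMat {Ω : Type*} {n : ℕ} (m : MeasurableSpace Ω) [MeasurableSpace Ω] (μ : Measure Ω)
    (M : Ω → Matrix (Fin n) (Fin n) ℝ) : Ω → Matrix (Fin n) (Fin n) ℝ :=
  fun ω => Matrix.of fun i j => (μ[fun ω' => M ω' i j | m]) ω

/-- Conditional covariance matrix `Cov(V|m) = E[V Vᵀ|m] − E[V|m]·E[V|m]ᵀ` (entrywise). -/
def covMat {Ω : Type*} {n : ℕ} (m : MeasurableSpace Ω) [MeasurableSpace Ω] (μ : Measure Ω)
    (V : Ω → Fin n → ℝ) : Ω → Matrix (Fin n) (Fin n) ℝ :=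
  fun ω => ceMat m μ (fun ω' => Matrix.vecMulVec (V ω') (V ω')) ω
    - Matrix.vecMulVec (ceVec m μ V ω) (ceVec m μ V ω)

/-- Entrywise expectation of a random matrix. -/
def expMat {Ω : Type*} [MeasurableSpace Ω] {n : ℕ} (μ : Measure Ω)
    (M : Ω → Matrix (Fin n) (Fin n) ℝ) : Matrix (Fin n) (Fin n) ℝ :=
  Matrix.of fun i j => ∫ ω, M ω i j ∂μ

/-- `Tr(E[M])` for a random matrix `M` (expectation entrywise). -/
def trExp {Ω : Type*} [MeasurableSpace Ω] {n : ℕ} (μ : Measure Ω)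
    (M : Ω → Matrix (Fin n) (Fin n) ℝ) : ℝ :=
  Matrix.trace (expMat μ M)

/-!
Write `W = E[Z | Y]`. As `X = (Y - Z) / √snr` with `Y` known, `Cov(X | Y) = Cov(Z | Y) / snr`.
The entries of `Cov(Z | Y)` are the conditional expectations of `Zᵢ Zⱼ - Wᵢ Wⱼ`, and conditional
expectation contracts `L²`, so `Tr E[Cov(Z | Y)²] ≤ E‖Z‖⁴ - 2 E⟨W, Z⟩² + E‖W‖⁴`. Since `‖W‖²` is
the conditional expectation of `⟨W, Z⟩`, this is at most `E‖Z‖⁴ - E‖W‖⁴`, where `E‖Z‖⁴ = n (n + 2)`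
and `E‖W‖⁴ ≥ (E‖W‖²)²`. Finally `n = E⟨Y, Z⟩ = E⟨Y, W⟩`, so Cauchy–Schwarz gives
`n² ≤ E‖Y‖² E‖W‖²`, and the power constraint bounds `E‖Y‖²` by `n (1 + snr)`.
-/

instance holderTriple_four_four_two : ENNReal.HolderTriple 4 4 2 where
  inv_add_inv_eq_inv := by
    rw [← two_mul, show (4 : ENNReal) = 2 * 2 by norm_num, ENNReal.mul_inv (by simp) (by simp),
      ← mul_assoc, ENNReal.mul_inv_cancel (by simp) (by simp), one_mul]

section DotProduct

variable {α ι : Type*} [Fintype ι]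

lemma sum_sum_sq_mul_sub_mul {R : Type*} [CommRing R] (a b : ι → R) :
    ∑ i, ∑ j, (a i * a j - b i * b j) ^ 2 =
      (a ⬝ᵥ a) ^ 2 - 2 * (b ⬝ᵥ a) ^ 2 + (b ⬝ᵥ b) ^ 2 := by
  simp only [dotProduct, sq (Finset.sum _ _), Finset.sum_mul_sum]
  simp only [Finset.mul_sum, ← Finset.sum_sub_distrib, ← Finset.sum_add_distrib]
  refine Finset.sum_congr rfl fun i _ => Finset.sum_congr rfl fun j _ => ?_
  ring

variable [MeasurableSpace α] {μ : Measure α} {U V : α → ι → ℝ}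

lemma memLp_two_of_integrable_sum_sq (hU : AEStronglyMeasurable U μ)
    (hU2 : Integrable (fun a => ∑ i, U a i ^ 2) μ) : MemLp U 2 μ := by
  have hUi (i : ι) : AEStronglyMeasurable (fun a => U a i) μ :=
    (continuous_apply i).comp_aestronglyMeasurable hU
  refine .of_eval fun i => (memLp_two_iff_integrable_sq (hUi i)).2 ?_
  refine hU2.mono' ((hUi i).pow 2) (.of_forall fun a => ?_)
  rw [norm_of_nonneg (sq_nonneg _)]
  exact Finset.single_le_sum (f := fun i => U a i ^ 2) (fun _ _ => sq_nonneg _) (Finset.mem_univ i)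

lemma memLp_dotProduct {p q r : ENNReal} [ENNReal.HolderTriple p q r]
    (hU : MemLp U p μ) (hV : MemLp V q μ) : MemLp (fun a => U a ⬝ᵥ V a) r μ :=
  memLp_finsetSum _ fun i _ => (hV.eval i).mul' (hU.eval i)

lemma integrable_dotProduct {p q : ENNReal} [ENNReal.HolderConjugate p q]
    (hU : MemLp U p μ) (hV : MemLp V q μ) : Integrable (fun a => U a ⬝ᵥ V a) μ :=
  memLp_one_iff_integrable.1 (memLp_dotProduct hU hV)

lemma integral_dotProduct_eq_zero_of_indepFun (hUV : IndepFun U V μ) (hU : Integrable U μ)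
    (hV : Integrable V μ) (hV0 : ∀ i, ∫ a, V a i ∂μ = 0) : ∫ a, U a ⬝ᵥ V a ∂μ = 0 := by
  have coords_indep (i : ι) : IndepFun (fun a => U a i) (fun a => V a i) μ :=
    hUV.comp (measurable_pi_apply i) (measurable_pi_apply i)
  have UV_integrable (i : ι) : Integrable (fun a => U a i * V a i) μ :=
    (coords_indep i).integrable_mul (hU.eval i) (hV.eval i)
  simp only [dotProduct]
  rw [integral_finsetSum _ fun i _ => UV_integrable i]
  refine Finset.sum_eq_zero fun i _ => ?_
  rw [(coords_indep i).integral_fun_mul_eq_mul_integral (hU.eval i).aestronglyMeasurable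
    (hV.eval i).aestronglyMeasurable, hV0, mul_zero]

lemma integral_dotProduct_self_nonneg : 0 ≤ ∫ a, U a ⬝ᵥ U a ∂μ :=
  integral_nonneg fun a => by simpa using dotProduct_self_star_nonneg (U a)

lemma sq_integral_dotProduct_le (hU : MemLp U 2 μ) (hV : MemLp V 2 μ) :
    (∫ a, U a ⬝ᵥ V a ∂μ) ^ 2 ≤ (∫ a, U a ⬝ᵥ U a ∂μ) * ∫ a, V a ⬝ᵥ V a ∂μ := by
  have hUU := integrable_dotProduct hU hU
  have hUV := integrable_dotProduct hU hV
  have hVV := integrable_dotProduct hV hV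
  have quadratic_nonneg (t : ℝ) : 0 ≤ (∫ a, U a ⬝ᵥ U a ∂μ) * (t * t) +
      (2 * ∫ a, U a ⬝ᵥ V a ∂μ) * t + ∫ a, V a ⬝ᵥ V a ∂μ := by
    calc 0 ≤ ∫ a, (t • U a + V a) ⬝ᵥ (t • U a + V a) ∂μ :=
          integral_dotProduct_self_nonneg
      _ = ∫ a, (t * t * (U a ⬝ᵥ U a) + 2 * t * (U a ⬝ᵥ V a) + V a ⬝ᵥ V a) ∂μ := by
          congr with a
          simp only [dotProduct_add, add_dotProduct, dotProduct_smul, smul_dotProduct, smul_eq_mul,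
            dotProduct_comm (V a) (U a)]
          ring
      _ = _ := by
          rw [integral_add ((hUU.const_mul _).fun_add (hUV.const_mul _)) hVV,
            integral_add (hUU.const_mul _) (hUV.const_mul _), integral_const_mul,
            integral_const_mul]
          ring
  have := discrim_le_zero quadratic_nonneg
  rw [discrim] at this
  linarith

lemma sq_integral_le_integral_sq [IsProbabilityMeasure μ] {f : α → ℝ} (hf : MemLp f 2 μ) :
    (∫ a, f a ∂μ) ^ 2 ≤ ∫ a, f a ^ 2 ∂μ := by
  have variance_f_nonneg := variance_nonneg f μ
  rw [variance_eq_sub hf, sub_nonneg] at variance_f_nonneg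
  exact variance_f_nonneg

end DotProduct

section GaussianMoments

open scoped Nat

lemma integral_pow_two_mul_gaussianReal_zero_one (k : ℕ) :
    ∫ x, x ^ (2 * k) ∂gaussianReal 0 1 = (2 * k - 1 : ℕ)‼ := by
  have gamma_integral : ∫ x in Set.Ioi (0 : ℝ), x ^ (2 * k) * rexp (-x ^ 2 / 2) =
      2⁻¹ ^ (-(2 * k + 1 : ℝ) / 2) * (1 / 2) * Gamma (k + 1 / 2) := by
    have h := integral_rpow_mul_exp_neg_mul_rpow (p := 2) (q := 2 * k) (b := 2⁻¹) two_pos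
      (by linarith [k.cast_nonneg (α := ℝ)]) (by norm_num)
    rw [show ((2 * k + 1 : ℝ) / 2) = k + 1 / 2 by ring] at h
    rw [← h]
    refine setIntegral_congr_fun measurableSet_Ioi fun x _ => ?_
    simp only [rpow_two]
    rw [← rpow_natCast]
    push_cast
    ring_nf
  have even_integral : ∫ x, x ^ (2 * k) * rexp (-x ^ 2 / 2) =
      2 * ∫ x in Set.Ioi (0 : ℝ), x ^ (2 * k) * rexp (-x ^ 2 / 2) := by
    rw [← integral_comp_abs]
    simp only [pow_mul, sq_abs]
  have half_power : (2⁻¹ : ℝ) ^ (-(2 * k + 1 : ℝ) / 2) = 2 ^ k * √2 := by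
    rw [inv_rpow two_pos.le, ← rpow_neg two_pos.le, sqrt_eq_rpow, ← rpow_natCast,
      ← rpow_add two_pos]
    ring_nf
  calc ∫ x, x ^ (2 * k) ∂gaussianReal 0 1
      = (√(2 * π))⁻¹ * ∫ x, x ^ (2 * k) * rexp (-x ^ 2 / 2) := by
        rw [integral_gaussianReal_eq_integral_smul one_ne_zero, ← integral_const_mul]
        refine integral_congr_ae (.of_forall fun x => ?_)
        simp [gaussianPDFReal]
        ring
    _ = (2 * k - 1 : ℕ)‼ := by
        rw [even_integral, gamma_integral, half_power, Gamma_nat_add_half, sqrt_mul two_pos.le]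
        field_simp

lemma integral_sq_gaussianReal_zero_one : ∫ x, x ^ 2 ∂gaussianReal 0 1 = 1 := by
  simpa using integral_pow_two_mul_gaussianReal_zero_one 1

lemma memLp_sq_gaussianReal_zero_one : MemLp (fun x : ℝ => x ^ 2) 2 (gaussianReal 0 1) := by
  have memLp_four := memLp_id_gaussianReal' (μ := 0) (v := 1) 4 (by simp)
  simpa only [sq, id] using memLp_four.mul' memLp_four

lemma variance_sq_gaussianReal_zero_one : Var[fun x => x ^ 2; gaussianReal 0 1] = 2 := by
  have fourth_moment : ∫ x, (x ^ 2) ^ 2 ∂gaussianReal 0 1 = 3 := by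
    simpa [← pow_mul, Nat.doubleFactorial] using integral_pow_two_mul_gaussianReal_zero_one 2
  rw [variance_eq_sub memLp_sq_gaussianReal_zero_one]
  simp only [Pi.pow_apply, integral_sq_gaussianReal_zero_one, fourth_moment]
  norm_num

end GaussianMoments

section ProductMeasure

variable (ι : Type*) [Fintype ι] {ν : Measure ℝ} [IsProbabilityMeasure ν]

lemma integral_dotProduct_self_pi (hν : Integrable (fun x => x ^ 2) ν) :
    ∫ z, z ⬝ᵥ z ∂Measure.pi (fun _ : ι => ν) = Fintype.card ι * ∫ x, x ^ 2 ∂ν := by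
  simp only [dotProduct, ← sq]
  rw [integral_finsetSum _ fun i _ => integrable_comp_eval (μ := fun _ : ι => ν) hν]
  simp [integral_comp_eval (μ := fun _ : ι => ν) hν.aestronglyMeasurable]

lemma variance_dotProduct_self_pi (hν : MemLp (fun x => x ^ 2) 2 ν) :
    Var[fun z => z ⬝ᵥ z; Measure.pi (fun _ : ι => ν)] =
      Fintype.card ι * Var[fun x => x ^ 2; ν] := by
  have sum_sq : (fun z : ι → ℝ => z ⬝ᵥ z) = ∑ i, fun z => z i ^ 2 := by
    ext z
    simp [dotProduct, sq]
  rw [sum_sq, variance_sum_pi fun _ => hν]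
  simp

lemma integral_dotProduct_self_pi_gaussianReal :
    ∫ z, z ⬝ᵥ z ∂Measure.pi (fun _ : ι => gaussianReal 0 1) = Fintype.card ι := by
  rw [integral_dotProduct_self_pi ι (memLp_id_gaussianReal 2).integrable_sq,
    integral_sq_gaussianReal_zero_one, mul_one]

lemma memLp_id_pi_gaussianReal {p : ENNReal} (hp : p ≠ ⊤) :
    MemLp (fun z => z) p (Measure.pi fun _ : ι => gaussianReal 0 1) :=
  .of_eval fun i =>
    (memLp_id_gaussianReal' p hp).comp_measurePreserving (measurePreserving_eval _ i)

lemma integral_sq_dotProduct_self_pi_gaussianReal :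
    ∫ z, (z ⬝ᵥ z) ^ 2 ∂Measure.pi (fun _ : ι => gaussianReal 0 1) =
      Fintype.card ι * (Fintype.card ι + 2) := by
  have memLp_four := memLp_id_pi_gaussianReal ι (p := 4) (by simp)
  have variance_normSq := variance_dotProduct_self_pi ι memLp_sq_gaussianReal_zero_one
  rw [variance_eq_sub (memLp_dotProduct memLp_four memLp_four),
    integral_dotProduct_self_pi_gaussianReal, variance_sq_gaussianReal_zero_one] at variance_normSq
  simp only [Pi.pow_apply] at variance_normSq
  linear_combination variance_normSq

end ProductMeasure

section ConditionalMean

variable {Ω : Type*} {n : ℕ} {m mΩ : MeasurableSpace Ω} {μ : Measure Ω} {U V : Ω → Fin n → ℝ}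

lemma integral_sq_condExp_le {f : Ω → ℝ} (hf : MemLp f 2 μ) :
    ∫ ω, (μ[f|m]) ω ^ 2 ∂μ ≤ ∫ ω, f ω ^ 2 ∂μ := by
  have h := integral_norm_condExp_rpow_le (m := m) one_le_two (f := f) (μ := μ)
  simp only [rpow_two, norm_eq_abs, sq_abs] at h
  exact h hf.integrable_sq

lemma measurable_ceVec : Measurable[m] (ceVec m μ V) :=
  @measurable_pi_lambda _ _ _ m _ _ fun _ => stronglyMeasurable_condExp.measurable

lemma memLp_ceVec {p : ENNReal} (hp : 1 ≤ p) (hV : MemLp V p μ) : MemLp (ceVec m μ V) p μ :=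
  .of_eval fun i => (hV.eval i).condExp hp

lemma ceVec_sub_of_measurable_left [IsFiniteMeasure μ] (hm : m ≤ mΩ) (hU : Measurable[m] U)
    (hUint : Integrable U μ) (hV : Integrable V μ) :
    ceVec m μ (U - V) =ᵐ[μ] U - ceVec m μ V := by
  have entry (i : Fin n) : ∀ᵐ ω ∂μ, ceVec m μ (U - V) ω i = U ω i - ceVec m μ V ω i := by
    have known : μ[fun ω => U ω i|m] = fun ω => U ω i := condExp_of_stronglyMeasurable hm
      ((measurable_pi_apply i).comp hU).stronglyMeasurable (hUint.eval i)
    have h := condExp_sub (hUint.eval i) (hV.eval i) m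
    rw [known] at h
    exact h
  filter_upwards [ae_all_iff.2 entry] with ω h
  exact funext h

lemma ceVec_smul (c : ℝ) : ceVec m μ (c • V) =ᵐ[μ] c • ceVec m μ V := by
  filter_upwards [ae_all_iff.2 fun i => condExp_smul (μ := μ) c (fun ω => V ω i) m] with ω h
  exact funext h

lemma condExp_dotProduct_of_measurable_left [IsFiniteMeasure μ] (hU : Measurable[m] U)
    (hU2 : MemLp U 2 μ) (hV : MemLp V 2 μ) :
    μ[fun ω => U ω ⬝ᵥ V ω|m] =ᵐ[μ] fun ω => U ω ⬝ᵥ ceVec m μ V ω := by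
  have UV_integrable (i : Fin n) : Integrable (fun ω => U ω i * V ω i) μ :=
    (hU2.eval i).integrable_mul (hV.eval i)
  have pull_out (i : Fin n) := condExp_mul_of_stronglyMeasurable_left
    ((measurable_pi_apply i).comp hU).stronglyMeasurable (UV_integrable i)
    ((hV.eval i).integrable one_le_two)
  have sum_coords : (fun ω => U ω ⬝ᵥ V ω) = ∑ i, fun ω => U ω i * V ω i := by
    ext ω
    simp [dotProduct]
  rw [sum_coords]
  filter_upwards [condExp_finsetSum (fun i _ => UV_integrable i) m, ae_all_iff.2 pull_out]
    with ω h_sum h_pull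
  rw [h_sum, Finset.sum_apply]
  exact Finset.sum_congr rfl fun i _ => h_pull i

lemma integral_dotProduct_ceVec [IsFiniteMeasure μ] (hm : m ≤ mΩ) (hU : Measurable[m] U)
    (hU2 : MemLp U 2 μ) (hV : MemLp V 2 μ) :
    ∫ ω, U ω ⬝ᵥ ceVec m μ V ω ∂μ = ∫ ω, U ω ⬝ᵥ V ω ∂μ := by
  rw [← integral_congr_ae (condExp_dotProduct_of_measurable_left hU hU2 hV), integral_condExp hm]

lemma sq_integral_dotProduct_le_ceVec [IsFiniteMeasure μ] (hm : m ≤ mΩ) (hU : Measurable[m] U)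
    (hU2 : MemLp U 2 μ) (hV : MemLp V 2 μ) :
    (∫ ω, U ω ⬝ᵥ V ω ∂μ) ^ 2 ≤
      (∫ ω, U ω ⬝ᵥ U ω ∂μ) * ∫ ω, ceVec m μ V ω ⬝ᵥ ceVec m μ V ω ∂μ := by
  rw [← integral_dotProduct_ceVec hm hU hU2 hV]
  exact sq_integral_dotProduct_le hU2 (memLp_ceVec one_le_two hV)

lemma integral_sq_ceVec_dotProduct_self_le [IsFiniteMeasure μ] (hV : MemLp V 4 μ) :
    ∫ ω, (ceVec m μ V ω ⬝ᵥ ceVec m μ V ω) ^ 2 ∂μ ≤ ∫ ω, (ceVec m μ V ω ⬝ᵥ V ω) ^ 2 ∂μ := by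
  have hV2 : MemLp V 2 μ := hV.mono_exponent (by norm_num)
  have hW : MemLp (ceVec m μ V) 4 μ := memLp_ceVec (by norm_num) hV
  have projection := condExp_dotProduct_of_measurable_left measurable_ceVec
    (memLp_ceVec (m := m) one_le_two hV2) hV2
  calc _ = ∫ ω, (μ[fun ω => ceVec m μ V ω ⬝ᵥ V ω|m]) ω ^ 2 ∂μ :=
        integral_congr_ae (projection.symm.fun_comp (· ^ 2))
    _ ≤ _ := integral_sq_condExp_le (memLp_dotProduct hW hV)

end ConditionalMean

section ConditionalCovariance

variable {Ω : Type*} {n : ℕ} {m mΩ : MeasurableSpace Ω} {μ : Measure Ω} {U V : Ω → Fin n → ℝ}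

lemma condExp_sub_mul_sub_of_stronglyMeasurable_left [IsFiniteMeasure μ] (hm : m ≤ mΩ)
    {f f' g g' : Ω → ℝ} (hf : StronglyMeasurable[m] f) (hf' : StronglyMeasurable[m] f')
    (hf2 : MemLp f 2 μ) (hf2' : MemLp f' 2 μ) (hg : MemLp g 2 μ) (hg' : MemLp g' 2 μ) :
    μ[fun ω => (f ω - g ω) * (f' ω - g' ω)|m] =ᵐ[μ]
      fun ω => f ω * f' ω - f ω * (μ[g'|m]) ω - (μ[g|m]) ω * f' ω +
        (μ[fun ω => g ω * g' ω|m]) ω := by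
  have hff' : Integrable (f * f') μ := hf2.integrable_mul hf2'
  have hfg' : Integrable (f * g') μ := hf2.integrable_mul hg'
  have hgf' : Integrable (g * f') μ := hg.integrable_mul hf2'
  have hgg' : Integrable (g * g') μ := hg.integrable_mul hg'
  have expand : (fun ω => (f ω - g ω) * (f' ω - g' ω)) = f * f' - f * g' - g * f' + g * g' := by
    ext ω
    simp only [Pi.sub_apply, Pi.add_apply, Pi.mul_apply]
    ring
  have known : μ[f * f'|m] = f * f' := condExp_of_stronglyMeasurable hm (hf.mul hf') hff'
  rw [expand]
  filter_upwards [condExp_add ((hff'.sub hfg').sub hgf') hgg' m,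
    condExp_sub (hff'.sub hfg') hgf' m, condExp_sub hff' hfg' m,
    condExp_mul_of_stronglyMeasurable_left hf hfg' (hg'.integrable one_le_two),
    condExp_mul_of_stronglyMeasurable_right hf' hgf' (hg.integrable one_le_two)]
    with ω h_add h_sub h_sub' h_left h_right
  rw [h_add, Pi.add_apply, h_sub, Pi.sub_apply, h_sub', Pi.sub_apply, known, h_left, h_right]
  rfl

lemma covMat_apply (ω : Ω) (i j : Fin n) :
    covMat m μ V ω i j =
      (μ[fun ω => V ω i * V ω j|m]) ω - ceVec m μ V ω i * ceVec m μ V ω j := rfl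

lemma isSymm_covMat (ω : Ω) : (covMat m μ V ω).IsSymm :=
  .ext fun i j => by simp only [covMat_apply, mul_comm]

lemma covMat_sub_of_measurable_left [IsFiniteMeasure μ] (hm : m ≤ mΩ) (hU : Measurable[m] U)
    (hU2 : MemLp U 2 μ) (hV : MemLp V 2 μ) :
    covMat m μ (U - V) =ᵐ[μ] covMat m μ V := by
  have second_moment (i j : Fin n) := condExp_sub_mul_sub_of_stronglyMeasurable_left hm
    ((measurable_pi_apply i).comp hU).stronglyMeasurable
    ((measurable_pi_apply j).comp hU).stronglyMeasurable
    (hU2.eval i) (hU2.eval j) (hV.eval i) (hV.eval j)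
  filter_upwards [ae_all_iff.2 fun i => ae_all_iff.2 (second_moment i),
    ceVec_sub_of_measurable_left hm hU (hU2.integrable one_le_two) (hV.integrable one_le_two)]
    with ω h_second h_mean
  ext i j
  rw [covMat_apply, covMat_apply, h_mean]
  refine (congrArg (· - _) (h_second i j)).trans ?_
  simp only [Pi.sub_apply, Function.comp_apply, ceVec]
  ring

lemma covMat_smul (c : ℝ) : covMat m μ (c • V) =ᵐ[μ] c ^ 2 • covMat m μ V := by
  have entry (i j : Fin n) : ∀ᵐ ω ∂μ, (μ[fun ω => (c • V) ω i * (c • V) ω j|m]) ω =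
      c ^ 2 * (μ[fun ω => V ω i * V ω j|m]) ω := by
    have factor : (fun ω => (c • V) ω i * (c • V) ω j) = c ^ 2 • fun ω => V ω i * V ω j := by
      ext ω
      simp only [Pi.smul_apply, smul_eq_mul]
      ring
    rw [factor]
    exact condExp_smul (c ^ 2) _ m
  filter_upwards [ae_all_iff.2 fun i => ae_all_iff.2 (entry i), ceVec_smul (m := m) (V := V) c]
    with ω h_entry h_mean
  ext i j
  rw [covMat_apply, h_entry, h_mean]
  simp only [covMat_apply, Pi.smul_apply, Matrix.smul_apply, smul_eq_mul]
  ring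

lemma memLp_covMat_apply (hV : MemLp V 4 μ) (i j : Fin n) :
    MemLp (fun ω => covMat m μ V ω i j) 2 μ := by
  have hW : MemLp (ceVec m μ V) 4 μ := memLp_ceVec (by norm_num) hV
  exact (((hV.eval j).mul' (hV.eval i)).condExp one_le_two).sub ((hW.eval j).mul' (hW.eval i))

lemma integral_sq_covMat_apply_le [IsFiniteMeasure μ] (hm : m ≤ mΩ) (hV : MemLp V 4 μ)
    (i j : Fin n) :
    ∫ ω, covMat m μ V ω i j ^ 2 ∂μ ≤
      ∫ ω, (V ω i * V ω j - ceVec m μ V ω i * ceVec m μ V ω j) ^ 2 ∂μ := by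
  have hW : MemLp (ceVec m μ V) 4 μ := memLp_ceVec (by norm_num) hV
  have hVV : MemLp (fun ω => V ω i * V ω j) 2 μ := (hV.eval j).mul' (hV.eval i)
  have hWW : MemLp (fun ω => ceVec m μ V ω i * ceVec m μ V ω j) 2 μ :=
    (hW.eval j).mul' (hW.eval i)
  have WW_measurable : StronglyMeasurable[m] fun ω => ceVec m μ V ω i * ceVec m μ V ω j :=
    stronglyMeasurable_condExp.mul stronglyMeasurable_condExp
  have covMat_eq_condExp : (fun ω => covMat m μ V ω i j) =ᵐ[μ]
      μ[fun ω => V ω i * V ω j - ceVec m μ V ω i * ceVec m μ V ω j|m] := by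
    have h := condExp_sub (hVV.integrable one_le_two) (hWW.integrable one_le_two) m
    rw [condExp_of_stronglyMeasurable hm WW_measurable (hWW.integrable one_le_two)] at h
    exact h.symm
  calc _ = ∫ ω, (μ[fun ω => V ω i * V ω j - ceVec m μ V ω i * ceVec m μ V ω j|m]) ω ^ 2 ∂μ :=
        integral_congr_ae (covMat_eq_condExp.fun_comp (· ^ 2))
    _ ≤ _ := integral_sq_condExp_le (hVV.sub hWW)

end ConditionalCovariance

section TraceOfExpectation

variable {Ω : Type*} {n : ℕ} {m mΩ : MeasurableSpace Ω} {μ : Measure Ω}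
  {M N : Ω → Matrix (Fin n) (Fin n) ℝ}

lemma trExp_congr_ae (h : M =ᵐ[μ] N) : trExp μ M = trExp μ N :=
  Finset.sum_congr (rfl : Finset.univ = _) fun i _ => integral_congr_ae (h.fun_comp fun A => A i i)

lemma trExp_smul (c : ℝ) : trExp μ (c • M) = c * trExp μ M := by
  simp [trExp, expMat, trace, integral_const_mul, Finset.mul_sum]

lemma trExp_sq_of_isSymm (hM : ∀ ω, (M ω).IsSymm)
    (hM2 : ∀ i j, MemLp (fun ω => M ω i j) 2 μ) :
    trExp μ (fun ω => M ω ^ 2) = ∑ i, ∑ j, ∫ ω, M ω i j ^ 2 ∂μ := by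
  simp only [trExp, expMat, trace, diag_apply, of_apply]
  refine Finset.sum_congr rfl fun i _ => ?_
  rw [← integral_finsetSum _ fun j _ => (hM2 i j).integrable_sq]
  refine integral_congr_ae (.of_forall fun ω => ?_)
  simp only [sq, mul_apply, (hM ω).apply]

lemma trExp_sq_covMat_le [IsFiniteMeasure μ] (hm : m ≤ mΩ) {V : Ω → Fin n → ℝ}
    (hV : MemLp V 4 μ) :
    trExp μ (fun ω => covMat m μ V ω ^ 2) ≤
      ∫ ω, (V ω ⬝ᵥ V ω) ^ 2 ∂μ - ∫ ω, (ceVec m μ V ω ⬝ᵥ ceVec m μ V ω) ^ 2 ∂μ := by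
  set W := ceVec m μ V
  have hW : MemLp W 4 μ := memLp_ceVec (by norm_num) hV
  have hVV := (memLp_dotProduct (r := 2) hV hV).integrable_sq
  have hWV := (memLp_dotProduct (r := 2) hW hV).integrable_sq
  have hWW := (memLp_dotProduct (r := 2) hW hW).integrable_sq
  have entry_integrable (i j : Fin n) :
      Integrable (fun ω => (V ω i * V ω j - W ω i * W ω j) ^ 2) μ :=
    MemLp.integrable_sq (((hV.eval j).mul' (hV.eval i)).sub ((hW.eval j).mul' (hW.eval i)))
  calc trExp μ (fun ω => covMat m μ V ω ^ 2)
      = ∑ i, ∑ j, ∫ ω, covMat m μ V ω i j ^ 2 ∂μ :=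
        trExp_sq_of_isSymm isSymm_covMat (memLp_covMat_apply hV)
    _ ≤ ∑ i, ∑ j, ∫ ω, (V ω i * V ω j - W ω i * W ω j) ^ 2 ∂μ :=
        Finset.sum_le_sum fun i _ => Finset.sum_le_sum fun j _ =>
          integral_sq_covMat_apply_le hm hV i j
    _ = ∫ ω, ((V ω ⬝ᵥ V ω) ^ 2 - 2 * (W ω ⬝ᵥ V ω) ^ 2 + (W ω ⬝ᵥ W ω) ^ 2) ∂μ := by
        simp only [← sum_sum_sq_mul_sub_mul]
        rw [integral_finsetSum _ fun i _ => integrable_finsetSum _ fun j _ =>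
          entry_integrable i j]
        exact Finset.sum_congr rfl fun i _ =>
          (integral_finsetSum _ fun j _ => entry_integrable i j).symm
    _ = ∫ ω, (V ω ⬝ᵥ V ω) ^ 2 ∂μ - 2 * ∫ ω, (W ω ⬝ᵥ V ω) ^ 2 ∂μ + ∫ ω, (W ω ⬝ᵥ W ω) ^ 2 ∂μ := by
        have h_sub : Integrable (fun ω => (V ω ⬝ᵥ V ω) ^ 2 - 2 * (W ω ⬝ᵥ V ω) ^ 2) μ :=
          hVV.sub (hWV.const_mul 2)
        rw [integral_add h_sub hWW, integral_sub hVV (hWV.const_mul 2),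
          integral_const_mul]
    _ ≤ _ := by linarith [integral_sq_ceVec_dotProduct_self_le (m := m) hV]

lemma trExp_sq_covMat_le_of_measurable [IsProbabilityMeasure μ] (hm : m ≤ mΩ)
    {U V : Ω → Fin n → ℝ} (hU : Measurable[m] U) (hU2 : MemLp U 2 μ) (hV : MemLp V 4 μ) :
    trExp μ (fun ω => covMat m μ V ω ^ 2) ≤
      ∫ ω, (V ω ⬝ᵥ V ω) ^ 2 ∂μ - ((∫ ω, U ω ⬝ᵥ V ω ∂μ) ^ 2 / ∫ ω, U ω ⬝ᵥ U ω ∂μ) ^ 2 := by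
  have hW : MemLp (ceVec m μ V) 4 μ := memLp_ceVec (by norm_num) hV
  have quotient_le : (∫ ω, U ω ⬝ᵥ V ω ∂μ) ^ 2 / ∫ ω, U ω ⬝ᵥ U ω ∂μ ≤
      ∫ ω, ceVec m μ V ω ⬝ᵥ ceVec m μ V ω ∂μ :=
    div_le_of_le_mul₀ integral_dotProduct_self_nonneg integral_dotProduct_self_nonneg <| by
      rw [mul_comm]
      exact sq_integral_dotProduct_le_ceVec hm hU hU2 (hV.mono_exponent (by norm_num))
  calc trExp μ (fun ω => covMat m μ V ω ^ 2)
      ≤ ∫ ω, (V ω ⬝ᵥ V ω) ^ 2 ∂μ - ∫ ω, (ceVec m μ V ω ⬝ᵥ ceVec m μ V ω) ^ 2 ∂μ :=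
        trExp_sq_covMat_le hm hV
    _ ≤ ∫ ω, (V ω ⬝ᵥ V ω) ^ 2 ∂μ - (∫ ω, ceVec m μ V ω ⬝ᵥ ceVec m μ V ω ∂μ) ^ 2 :=
        sub_le_sub_left (sq_integral_le_integral_sq (memLp_dotProduct hW hW)) _
    _ ≤ _ := sub_le_sub_left
        (pow_le_pow_left₀ (div_nonneg (sq_nonneg _) integral_dotProduct_self_nonneg)
          quotient_le 2) _

end TraceOfExpectation

section Channel

variable {Ω : Type*} {n : ℕ} {X Z : Ω → Fin n → ℝ} {snr : ℝ}

lemma obs_eq : obs X Z snr = √snr • X + Z := rfl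

variable [MeasurableSpace Ω] {μ : Measure Ω}

lemma measurable_obs_obsSigma : Measurable[obsSigma X Z snr] (obs X Z snr) :=
  comap_measurable _

lemma obsSigma_le (hX : Measurable X) (hZ : Measurable Z) :
    obsSigma X Z snr ≤ ‹MeasurableSpace Ω› :=
  ((hX.const_smul √snr).add hZ).comap_le

lemma memLp_obs {p : ENNReal} (hX : MemLp X p μ) (hZ : MemLp Z p μ) :
    MemLp (obs X Z snr) p μ :=
  (hX.const_smul √snr).add hZ

lemma covMat_obsSigma_signal [IsFiniteMeasure μ] (hX : Measurable X) (hZ : Measurable Z)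
    (hX2 : MemLp X 2 μ) (hZ2 : MemLp Z 2 μ) (hsnr : 0 < snr) :
    covMat (obsSigma X Z snr) μ X =ᵐ[μ] snr⁻¹ • covMat (obsSigma X Z snr) μ Z := by
  have signal_eq : X = (√snr)⁻¹ • (obs X Z snr - Z) := by
    rw [obs_eq, add_sub_cancel_right, inv_smul_smul₀ (sqrt_ne_zero'.2 hsnr)]
  have scale := covMat_smul (m := obsSigma X Z snr) (μ := μ) (V := obs X Z snr - Z) (√snr)⁻¹
  rw [← signal_eq, inv_pow, sq_sqrt hsnr.le] at scale
  filter_upwards [scale, covMat_sub_of_measurable_left (obsSigma_le hX hZ)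
    measurable_obs_obsSigma (memLp_obs hX2 hZ2) hZ2] with ω h_scale h_shift
  rw [h_scale, Pi.smul_apply, Pi.smul_apply, h_shift]

lemma trExp_sq_covMat_obsSigma_signal [IsFiniteMeasure μ] (hX : Measurable X)
    (hZ : Measurable Z) (hX2 : MemLp X 2 μ) (hZ2 : MemLp Z 2 μ) (hsnr : 0 < snr) :
    trExp μ (fun ω => covMat (obsSigma X Z snr) μ X ω ^ 2) =
      trExp μ (fun ω => covMat (obsSigma X Z snr) μ Z ω ^ 2) / snr ^ 2 := by
  rw [div_eq_inv_mul, ← inv_pow, ← trExp_smul]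
  refine trExp_congr_ae ?_
  filter_upwards [covMat_obsSigma_signal hX hZ hX2 hZ2 hsnr] with ω h
  simp only [h, Pi.smul_apply, smul_pow]

lemma integral_obs_dotProduct_noise (hX : MemLp X 2 μ) (hZ : MemLp Z 2 μ)
    (huncorr : ∫ ω, X ω ⬝ᵥ Z ω ∂μ = 0) :
    ∫ ω, obs X Z snr ω ⬝ᵥ Z ω ∂μ = ∫ ω, Z ω ⬝ᵥ Z ω ∂μ := by
  simp only [obs_eq, Pi.add_apply, Pi.smul_apply, add_dotProduct, smul_dotProduct, smul_eq_mul]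
  rw [integral_add ((integrable_dotProduct hX hZ).const_mul _) (integrable_dotProduct hZ hZ),
    integral_const_mul, huncorr, mul_zero, zero_add]

lemma integral_obs_dotProduct_self (hX : MemLp X 2 μ) (hZ : MemLp Z 2 μ)
    (huncorr : ∫ ω, X ω ⬝ᵥ Z ω ∂μ = 0) (hsnr : 0 ≤ snr) :
    ∫ ω, obs X Z snr ω ⬝ᵥ obs X Z snr ω ∂μ =
      snr * ∫ ω, X ω ⬝ᵥ X ω ∂μ + ∫ ω, Z ω ⬝ᵥ Z ω ∂μ := by
  have hXX := integrable_dotProduct hX hX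
  have hXZ := integrable_dotProduct hX hZ
  calc ∫ ω, obs X Z snr ω ⬝ᵥ obs X Z snr ω ∂μ
      = ∫ ω, (snr * (X ω ⬝ᵥ X ω) + 2 * √snr * (X ω ⬝ᵥ Z ω) + Z ω ⬝ᵥ Z ω) ∂μ := by
        congr with ω
        simp only [obs_eq, Pi.add_apply, Pi.smul_apply, add_dotProduct, dotProduct_add,
          smul_dotProduct, dotProduct_smul, smul_eq_mul, dotProduct_comm (Z ω) (X ω)]
        linear_combination (X ω ⬝ᵥ X ω) * mul_self_sqrt hsnr
    _ = _ := by
        rw [integral_add ((hXX.const_mul _).fun_add (hXZ.const_mul _))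
            (integrable_dotProduct hZ hZ), integral_add (hXX.const_mul _) (hXZ.const_mul _),
          integral_const_mul, integral_const_mul, huncorr, mul_zero, add_zero]

end Channel

section StandardGaussianNoise

variable {Ω : Type*} [MeasurableSpace Ω] {μ : Measure Ω} {n : ℕ} {X Z : Ω → Fin n → ℝ}

lemma memLp_of_map_eq_pi_gaussianReal (hZ : Measurable Z)
    (hZlaw : Measure.map Z μ = Measure.pi fun _ : Fin n => gaussianReal 0 1) {p : ENNReal}
    (hp : p ≠ ⊤) : MemLp Z p μ := by
  have h := memLp_id_pi_gaussianReal (Fin n) hp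
  rw [← hZlaw] at h
  exact h.comp_of_map hZ.aemeasurable

lemma integral_dotProduct_self_of_map_eq_pi_gaussianReal (hZ : Measurable Z)
    (hZlaw : Measure.map Z μ = Measure.pi fun _ : Fin n => gaussianReal 0 1) :
    ∫ ω, Z ω ⬝ᵥ Z ω ∂μ = n := by
  have h := integral_dotProduct_self_pi_gaussianReal (Fin n)
  rwa [← hZlaw, integral_map hZ.aemeasurable (by fun_prop), Fintype.card_fin] at h

lemma integral_sq_dotProduct_self_of_map_eq_pi_gaussianReal (hZ : Measurable Z)
    (hZlaw : Measure.map Z μ = Measure.pi fun _ : Fin n => gaussianReal 0 1) :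
    ∫ ω, (Z ω ⬝ᵥ Z ω) ^ 2 ∂μ = n * (n + 2) := by
  have h := integral_sq_dotProduct_self_pi_gaussianReal (Fin n)
  rwa [← hZlaw, integral_map hZ.aemeasurable (by fun_prop), Fintype.card_fin] at h

lemma integral_apply_of_map_eq_pi_gaussianReal (hZ : Measurable Z)
    (hZlaw : Measure.map Z μ = Measure.pi fun _ : Fin n => gaussianReal 0 1) (i : Fin n) :
    ∫ ω, Z ω i ∂μ = 0 := by
  have h : ∫ z, z i ∂Measure.pi (fun _ : Fin n => gaussianReal 0 1) = 0 := by
    rw [integral_comp_eval (μ := fun _ : Fin n => gaussianReal 0 1) (f := fun x => x)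
      (by fun_prop), integral_id_gaussianReal]
  rwa [← hZlaw, integral_map hZ.aemeasurable (measurable_pi_apply i).aestronglyMeasurable] at h

lemma trExp_sq_covMat_obsSigma_noise_le [IsProbabilityMeasure μ] (hn : 1 ≤ n)
    (hX : Measurable X) (hZ : Measurable Z)
    (hZlaw : Measure.map Z μ = Measure.pi fun _ : Fin n => gaussianReal 0 1)
    (huncorr : ∫ ω, X ω ⬝ᵥ Z ω ∂μ = 0) (hX2 : MemLp X 2 μ) {P : ℝ}
    (hpow : ∫ ω, X ω ⬝ᵥ X ω ∂μ ≤ n * P) {snr : ℝ} (hsnr : 0 ≤ snr) :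
    trExp μ (fun ω => covMat (obsSigma X Z snr) μ Z ω ^ 2) ≤
      n * (n + 2) - (n / (1 + P * snr)) ^ 2 := by
  have hZ2 : MemLp Z 2 μ := memLp_of_map_eq_pi_gaussianReal hZ hZlaw (by simp)
  have hZ4 : MemLp Z 4 μ := memLp_of_map_eq_pi_gaussianReal hZ hZlaw (by simp)
  have bound := trExp_sq_covMat_le_of_measurable (obsSigma_le hX hZ) measurable_obs_obsSigma
    (memLp_obs (snr := snr) hX2 hZ2) hZ4
  rw [integral_obs_dotProduct_noise hX2 hZ2 huncorr,
    integral_obs_dotProduct_self hX2 hZ2 huncorr hsnr,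
    integral_dotProduct_self_of_map_eq_pi_gaussianReal hZ hZlaw,
    integral_sq_dotProduct_self_of_map_eq_pi_gaussianReal hZ hZlaw] at bound
  set power := ∫ ω, X ω ⬝ᵥ X ω ∂μ
  have n_pos : (0 : ℝ) < n := Nat.cast_pos.2 hn
  have power_nonneg : 0 ≤ power := integral_dotProduct_self_nonneg
  have P_nonneg : 0 ≤ P := nonneg_of_mul_nonneg_right (power_nonneg.trans hpow) n_pos
  have mean_energy_ge : n / (1 + P * snr) ≤ (n : ℝ) ^ 2 / (snr * power + n) := by
    rw [div_le_div_iff₀ (by positivity) (by positivity)]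
    nlinarith [mul_le_mul_of_nonneg_left hpow (mul_nonneg n_pos.le hsnr)]
  exact bound.trans (sub_le_sub_left (pow_le_pow_left₀ (by positivity) mean_energy_ge 2) _)

end StandardGaussianNoise

theorem derivative_mmse_power_bound_general {Ω : Type*} [MeasurableSpace Ω] (μ : Measure Ω)
    [IsProbabilityMeasure μ] (n : ℕ) (hn : 1 ≤ n) (X Z : Ω → Fin n → ℝ)
    (hX : Measurable X) (hZ : Measurable Z)
    (hZlaw : Measure.map Z μ = Measure.pi fun _ : Fin n => gaussianReal 0 1)
    (huncorr : ∫ ω, X ω ⬝ᵥ Z ω ∂μ = 0)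
    (hX2 : Integrable (fun ω => ∑ i, (X ω i) ^ 2) μ) (P : ℝ)
    (hpow : (1 / (n : ℝ)) * ∫ ω, ∑ i, (X ω i) ^ 2 ∂μ ≤ P)
    (snr : ℝ) (hsnr : 0 < snr) :
    (1 / (n : ℝ)) * trExp μ (fun ω => (covMat (obsSigma X Z snr) μ X ω) ^ 2) ≤
      ((n : ℝ) + 2 - n / (1 + P * snr) ^ 2) / snr ^ 2 := by
  have n_pos : (0 : ℝ) < n := Nat.cast_pos.2 hn
  have X_memLp : MemLp X 2 μ := memLp_two_of_integrable_sum_sq hX.aestronglyMeasurable hX2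
  have Z_memLp : MemLp Z 2 μ := memLp_of_map_eq_pi_gaussianReal hZ hZlaw (by simp)
  have power_le : ∫ ω, X ω ⬝ᵥ X ω ∂μ ≤ n * P := by
    rw [one_div, inv_mul_le_iff₀ n_pos] at hpow
    simpa only [dotProduct, sq] using hpow
  rw [trExp_sq_covMat_obsSigma_signal hX hZ X_memLp Z_memLp hsnr]
  calc (1 / (n : ℝ)) * (trExp μ (fun ω => covMat (obsSigma X Z snr) μ Z ω ^ 2) / snr ^ 2)
      ≤ (1 / (n : ℝ)) * ((n * (n + 2) - (n / (1 + P * snr)) ^ 2) / snr ^ 2) := by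
        gcongr
        exact trExp_sq_covMat_obsSigma_noise_le hn hX hZ hZlaw huncorr X_memLp power_le hsnr.le
    _ = ((n : ℝ) + 2 - n / (1 + P * snr) ^ 2) / snr ^ 2 := by
        rw [div_pow]
        field_simp

/-- **Power-constrained refinement of Proposition 9 (equation (45)).**
If `(1/n)·E[‖X‖²] ≤ 1` then `(1/n)·Tr(E[(Cov(X|Y))²]) ≤ (n + 2 − 1/(1+snr)²)/snr²`. -/
theorem derivative_mmse_power_bound {Ω : Type*} [MeasurableSpace Ω] (μ : Measure Ω) [IsProbabilityMeasure μ]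
    (n : ℕ) (hn : 1 ≤ n) (X Z : Ω → Fin n → ℝ)
    (hX : Measurable X) (hZ : Measurable Z)
    (hZlaw : Measure.map Z μ = Measure.pi fun _ : Fin n => gaussianReal 0 1)
    (hindep : IndepFun X Z μ)
    (hX2 : Integrable (fun ω => ∑ i, (X ω i) ^ 2) μ)
    (hpow : (1 / (n : ℝ)) * ∫ ω, ∑ i, (X ω i) ^ 2 ∂μ ≤ 1)
    (snr : ℝ) (hsnr : 0 < snr) :
    (1 / (n : ℝ)) * trExp μ (fun ω => (covMat (obsSigma X Z snr) μ X ω) ^ 2) ≤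
      ((n : ℝ) + 2 - 1 / (1 + snr) ^ 2) / snr ^ 2 := by
  have X_memLp : MemLp X 2 μ := memLp_two_of_integrable_sum_sq hX.aestronglyMeasurable hX2
  have Z_memLp : MemLp Z 2 μ := memLp_of_map_eq_pi_gaussianReal hZ hZlaw (by simp)
  have huncorr := integral_dotProduct_eq_zero_of_indepFun hindep (X_memLp.integrable one_le_two)
    (Z_memLp.integrable one_le_two) (integral_apply_of_map_eq_pi_gaussianReal hZ hZlaw)
  refine (derivative_mmse_power_bound_general μ n hn X Z hX hZ hZlaw huncorr hX2 1 hpow snr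
    hsnr).trans ?_
  rw [one_mul]
  gcongr
  exact_mod_cast hn

end
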